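/- Let S = ⟨S, δ, L⟩ and S' = ⟨S', δ', L'⟩ be image-finite FLTSs that are moreover witnessed w.r.t. fposΔPDL, and let x ∈ S, x' ∈ S'. Then the following are equivalent: (i) φ^S(x) ≤ φ^S'(x') for all formulas φ of fposΔPDL; (ii) there exists a crisp directed simulation Z between S and S' with Z(x,x'); (iii) φ^S(x) ≤ φ^S'(x') for all formulas φ of fposΔK. -/

import Mathlib

open unitInterval

noncomputable section
attribute [local instance] Classical.propDecidable

instance : Fact ((0:ℝ) ≤ 1) := ⟨zero_le_one⟩

/-- A left-continuous t-norm on the unit interval `[0,1]`: a commutative, associative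
binary operation with neutral element `1`, increasing in both arguments, that
distributes over suprema of nonempty sets (left-continuity). -/
structure Tnorm where
  mul : I → I → I
  mul_comm : ∀ x y, mul x y = mul y x
  mul_assoc : ∀ x y z, mul (mul x y) z = mul x (mul y z)
  mul_one : ∀ x, mul x 1 = x
  mul_le_mul : ∀ {a b c d : I}, a ≤ b → c ≤ d → mul a c ≤ mul b d
  left_continuous : ∀ (x : I) (s : Set I), s.Nonempty → mul x (sSup s) = sSup (mul x '' s)

/-- The residuum of a t-norm: `(x ⇒ y) = sup {z | z ⊗ x ≤ y}`. -/
def Tnorm.res (T : Tnorm) (x y : I) : I := sSup {z : I | T.mul z x ≤ y}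

/-- A fuzzy labeled transition system over actions `A`, propositions `P`, states `St`. -/
structure FLTS (A P St : Type) where
  delta : St → A → St → I
  label : St → P → I

/-- A crisp directed simulation between two FLTSs. -/
def IsDirSimulation {A P S S' : Type} (M : FLTS A P S) (M' : FLTS A P S')
    (Z : S → S' → Prop) : Prop :=
  (∀ x x', Z x x' → ∀ p, M.label x p ≤ M'.label x' p) ∧
  (∀ x y x' (ρ : A), Z x x' → 0 < M.delta x ρ y →
    ∃ y', M.delta x ρ y ≤ M'.delta x' ρ y' ∧ Z y y') ∧
  (∀ x x' y' (ρ : A), Z x x' → 0 < M'.delta x' ρ y' →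
    ∃ y, M'.delta x' ρ y' ≤ M.delta x ρ y ∧ Z y y')

mutual
/-- Formulas of fposΔPDL. -/
inductive PForm (A P : Type) : Type
  | const : I → PForm A P
  | prop : P → PForm A P
  | baaz : PForm A P → PForm A P
  | and : PForm A P → PForm A P → PForm A P
  | or : PForm A P → PForm A P → PForm A P
  | impl : I → PForm A P → PForm A P
  | dia : PEProg A P → PForm A P → PForm A P
  | box : PUProg A P → PForm A P → PForm A P
/-- Programs of fpos∃ΔPDL. -/
inductive PEProg (A P : Type) : Type
  | act : A → PEProg A P
  | comp : PEProg A P → PEProg A P → PEProg A P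
  | union : PEProg A P → PEProg A P → PEProg A P
  | star : PEProg A P → PEProg A P
  | test : PForm A P → PEProg A P
/-- Programs of fpos∀ΔPDL; `testImp φ a` is the program `(φ→a)?`. -/
inductive PUProg (A P : Type) : Type
  | act : A → PUProg A P
  | comp : PUProg A P → PUProg A P → PUProg A P
  | union : PUProg A P → PUProg A P → PUProg A P
  | star : PUProg A P → PUProg A P
  | testImp : PForm A P → I → PUProg A P
end

/-- The ⊗-product of the values of `r` along the path `x :: l`. -/
def chainProd (T : Tnorm) {St : Type} (r : St → St → I) : St → List St → I
  | _, [] => 1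
  | x, y :: l => T.mul (r x y) (chainProd T r y l)

mutual
/-- Semantics of fposΔPDL formulas. -/
def pformSem (T : Tnorm) {A P St : Type} (M : FLTS A P St) : PForm A P → St → I
  | .const a, _ => a
  | .prop p, x => M.label x p
  | .baaz φ, x => if pformSem T M φ x = 1 then 1 else 0
  | .and φ ψ, x => min (pformSem T M φ x) (pformSem T M ψ x)
  | .or φ ψ, x => max (pformSem T M φ x) (pformSem T M ψ x)
  | .impl a φ, x => T.res a (pformSem T M φ x)
  | .dia α φ, x => ⨆ y, T.mul (peSem T M α x y) (pformSem T M φ y)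
  | .box γ φ, x => ⨅ y, T.res (puSem T M γ x y) (pformSem T M φ y)
/-- Semantics of fpos∃ΔPDL programs. -/
def peSem (T : Tnorm) {A P St : Type} (M : FLTS A P St) : PEProg A P → St → St → I
  | .act ρ, x, y => M.delta x ρ y
  | .comp α β, x, y => ⨆ z, T.mul (peSem T M α x z) (peSem T M β z y)
  | .union α β, x, y => max (peSem T M α x y) (peSem T M β x y)
  | .star α, x, y =>
      sSup {v : I | ∃ l : List St, l.getLastD x = y ∧ v = chainProd T (peSem T M α) x l}
  | .test φ, x, y => if x = y then pformSem T M φ x else 0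
/-- Semantics of fpos∀ΔPDL programs. -/
def puSem (T : Tnorm) {A P St : Type} (M : FLTS A P St) : PUProg A P → St → St → I
  | .act ρ, x, y => M.delta x ρ y
  | .comp α β, x, y => ⨆ z, T.mul (puSem T M α x z) (puSem T M β z y)
  | .union α β, x, y => max (puSem T M α x y) (puSem T M β x y)
  | .star α, x, y =>
      sSup {v : I | ∃ l : List St, l.getLastD x = y ∧ v = chainProd T (puSem T M α) x l}
  | .testImp φ a, x, y => if x = y then T.res (pformSem T M φ x) a else 0
end

/-- An FLTS is witnessed w.r.t. fposΔPDL: every supremum (resp. infimum) occurring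
in the semantic clauses is attained by a greatest (resp. least) element. -/
def WitnessedP (T : Tnorm) {A P St : Type} (M : FLTS A P St) : Prop :=
  (∀ (α : PEProg A P) (φ : PForm A P) (x : St), ∃ y : St, ∀ z : St,
      T.mul (peSem T M α x z) (pformSem T M φ z) ≤
        T.mul (peSem T M α x y) (pformSem T M φ y)) ∧
  (∀ (γ : PUProg A P) (φ : PForm A P) (x : St), ∃ y : St, ∀ z : St,
      T.res (puSem T M γ x y) (pformSem T M φ y) ≤
        T.res (puSem T M γ x z) (pformSem T M φ z)) ∧
  (∀ (α β : PEProg A P) (x y : St), ∃ z : St, ∀ w : St,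
      T.mul (peSem T M α x w) (peSem T M β w y) ≤
        T.mul (peSem T M α x z) (peSem T M β z y)) ∧
  (∀ (α β : PUProg A P) (x y : St), ∃ z : St, ∀ w : St,
      T.mul (puSem T M α x w) (puSem T M β w y) ≤
        T.mul (puSem T M α x z) (puSem T M β z y)) ∧
  (∀ (α : PEProg A P) (x y : St), ∃ l : List St, l.getLastD x = y ∧
      ∀ l' : List St, l'.getLastD x = y →
        chainProd T (peSem T M α) x l' ≤ chainProd T (peSem T M α) x l) ∧
  (∀ (α : PUProg A P) (x y : St), ∃ l : List St, l.getLastD x = y ∧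
      ∀ l' : List St, l'.getLastD x = y →
        chainProd T (puSem T M α) x l' ≤ chainProd T (puSem T M α) x l)

/-- Formulas of fposΔK. -/
inductive PKForm (A P : Type) : Type
  | const : I → PKForm A P
  | prop : P → PKForm A P
  | baaz : PKForm A P → PKForm A P
  | and : PKForm A P → PKForm A P → PKForm A P
  | or : PKForm A P → PKForm A P → PKForm A P
  | impl : I → PKForm A P → PKForm A P
  | box : A → PKForm A P → PKForm A P
  | dia : A → PKForm A P → PKForm A P

/-- Semantics of fposΔK formulas. -/
def pkSem (T : Tnorm) {A P St : Type} (M : FLTS A P St) : PKForm A P → St → I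
  | .const a, _ => a
  | .prop p, x => M.label x p
  | .baaz φ, x => if pkSem T M φ x = 1 then 1 else 0
  | .and φ ψ, x => min (pkSem T M φ x) (pkSem T M ψ x)
  | .or φ ψ, x => max (pkSem T M φ x) (pkSem T M ψ x)
  | .impl a φ, x => T.res a (pkSem T M φ x)
  | .box ρ φ, x => ⨅ y, T.res (M.delta x ρ y) (pkSem T M φ y)
  | .dia ρ φ, x => ⨆ y, T.mul (M.delta x ρ y) (pkSem T M φ y)

/-- An FLTS is image-finite if every state has finitely many positive successors
for each action. -/
def ImageFinite {A P St : Type} (M : FLTS A P St) : Prop :=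
  ∀ (x : St) (ρ : A), {y : St | 0 < M.delta x ρ y}.Finite

/-!
Programs are interpreted as fuzzy relations. Along a crisp directed simulation `Z`, existential
programs are simulated forwards and universal ones backwards, up to suprema:
`α(x, y) ≤ sup {α'(x', y') | Z y y'}` in the forward case. Since `⊗` has a right adjoint it commutes
with all suprema, so this property passes through composition and iteration, and it is strong enough
to compare diamonds and boxes.

Conversely, the order of fposΔK formulas is itself a directed simulation. If a transition from `x`
of degree `a > 0` had no match at `x'`, the finitely many candidates at `x'` could be separated from
its target by one formula with values `1` and `0`. Image-finiteness bounds the degrees below `a` by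
some `c < a`, and the diamond of that formula (dually, a box of it joined with `c`) drops from `x`
to `x'`.
-/

namespace Tnorm

variable (T : Tnorm)

theorem mul_le_left (a b : I) : T.mul a b ≤ a :=
  (T.mul_le_mul le_rfl unitInterval.le_one').trans_eq (T.mul_one a)

theorem mul_zero (a : I) : T.mul a 0 = 0 :=
  le_antisymm (T.mul_comm a 0 ▸ T.mul_le_left 0 a) unitInterval.nonneg'

theorem one_mul (a : I) : T.mul 1 a = a := by
  rw [T.mul_comm, T.mul_one]

theorem le_res_iff {a b c : I} : c ≤ T.res a b ↔ T.mul c a ≤ b := by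
  refine ⟨fun h => ?_, fun h => le_sSup h⟩
  have hne : {z : I | T.mul z a ≤ b}.Nonempty :=
    ⟨0, (T.mul_le_left 0 a).trans unitInterval.nonneg'⟩
  calc T.mul c a ≤ T.mul a (T.res a b) := T.mul_comm c a ▸ T.mul_le_mul le_rfl h
    _ = sSup (T.mul a '' {z : I | T.mul z a ≤ b}) := T.left_continuous a _ hne
    _ ≤ b := by
      apply sSup_le
      rintro _ ⟨z, hz, rfl⟩
      exact T.mul_comm a z ▸ hz

theorem res_eq_one_iff {a b : I} : T.res a b = 1 ↔ a ≤ b := by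
  have h_top : T.res a b = 1 ↔ 1 ≤ T.res a b :=
    ⟨ge_of_eq, le_antisymm unitInterval.le_one'⟩
  rw [h_top, T.le_res_iff, T.one_mul]

theorem res_le_res {a b c d : I} (hba : b ≤ a) (hcd : c ≤ d) : T.res a c ≤ T.res b d :=
  T.le_res_iff.2 ((T.mul_le_mul le_rfl hba).trans ((T.le_res_iff.1 le_rfl).trans hcd))

/-- Sup-`⊗` composition of fuzzy relations. -/
def relComp {S : Type*} (r s : S → S → I) (x y : S) : I :=
  ⨆ z, T.mul (r x z) (s z y)

/-- Reflexive-transitive closure of a fuzzy relation, as a supremum over finite paths. A path from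
`x` is the list of its later states, so that the empty path ends at `x`. -/
def relStar {S : Type} (r : S → S → I) (x y : S) : I :=
  sSup {v : I | ∃ l : List S, l.getLastD x = y ∧ v = chainProd T r x l}

theorem one_le_relStar {S : Type} (r : S → S → I) (x : S) : 1 ≤ T.relStar r x x :=
  le_sSup ⟨[], rfl, rfl⟩

theorem mul_relStar_le {S : Type} (r : S → S → I) (x y z : S) :
    T.mul (r x y) (T.relStar r y z) ≤ T.relStar r x z := by
  rw [T.mul_comm, ← T.le_res_iff]
  apply sSup_le
  rintro _ ⟨l, rfl, rfl⟩
  rw [T.le_res_iff, T.mul_comm]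
  exact le_sSup ⟨y :: l, List.getLastD_cons .., rfl⟩

end Tnorm

/-- Along `Z`, the fuzzy relation `r` is simulated by `r'` up to suprema; in the calculus of fuzzy
relations, `Z⁻¹ ∘ r ≤ r' ∘ Z⁻¹`. Unlike in `IsDirSimulation`, no single target has to realize the
bound. -/
def SupSimulates {S S' : Type*} (Z : S → S' → Prop) (r : S → S → I) (r' : S' → S' → I) : Prop :=
  ∀ ⦃x x'⦄, Z x x' → ∀ y, r x y ≤ ⨆ y', ⨆ _ : Z y y', r' x' y'

namespace SupSimulates

section

variable {S S' : Type*} {Z : S → S' → Prop} {r s : S → S → I} {r' s' : S' → S' → I}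

theorem of_forall_pos
    (h : ∀ x x' y, Z x x' → 0 < r x y → ∃ y', r x y ≤ r' x' y' ∧ Z y y') :
    SupSimulates Z r r' := by
  intro x x' hx y
  rcases eq_or_lt_of_le (unitInterval.nonneg' (t := r x y)) with h_zero | h_pos
  · exact h_zero ▸ unitInterval.nonneg'
  · obtain ⟨y', hle, hy⟩ := h x x' y hx h_pos
    exact le_iSup₂_of_le y' hy hle

theorem mul_le (T : Tnorm) (hr : SupSimulates Z r r') {x y : S} {x' : S'} (hx : Z x x') {b c : I}
    (h : ∀ y', Z y y' → T.mul (r' x' y') b ≤ c) : T.mul (r x y) b ≤ c :=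
  T.le_res_iff.1 ((hr hx y).trans (iSup₂_le fun y' hy => T.le_res_iff.2 (h y' hy)))

theorem relComp (T : Tnorm) (hr : SupSimulates Z r r') (hs : SupSimulates Z s s') :
    SupSimulates Z (T.relComp r s) (T.relComp r' s') := by
  intro x x' hx y
  refine iSup_le fun z => hr.mul_le T hx fun z' hz => ?_
  rw [T.mul_comm]
  refine hs.mul_le T hz fun y' hy => ?_
  rw [T.mul_comm]
  exact le_iSup₂_of_le y' hy (le_iSup (fun z' => T.mul (r' x' z') (s' z' y')) z')

theorem union (hr : SupSimulates Z r r') (hs : SupSimulates Z s s') :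
    SupSimulates Z (fun x y => r x y ⊔ s x y) (fun x' y' => r' x' y' ⊔ s' x' y') :=
  fun _ _ hx y => max_le
    ((hr hx y).trans (iSup₂_mono fun _ _ => le_max_left _ _))
    ((hs hx y).trans (iSup₂_mono fun _ _ => le_max_right _ _))

theorem test {f : S → I} {f' : S' → I} (hf : ∀ ⦃x x'⦄, Z x x' → f x ≤ f' x') :
    SupSimulates Z (fun x y => if x = y then f x else 0)
      (fun x' y' => if x' = y' then f' x' else 0) := by
  refine of_forall_pos fun x x' y hx h_pos => ?_
  obtain rfl : x = y := by
    by_contra hxy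
    simp only [if_neg hxy, lt_self_iff_false] at h_pos
  exact ⟨x', by simpa only [if_true] using hf hx, hx⟩

theorem iSup_mul_le (T : Tnorm) (hr : SupSimulates Z r r') {f : S → I} {f' : S' → I}
    (hf : ∀ ⦃y y'⦄, Z y y' → f y ≤ f' y') {x : S} {x' : S'} (hx : Z x x') :
    ⨆ y, T.mul (r x y) (f y) ≤ ⨆ y', T.mul (r' x' y') (f' y') :=
  iSup_le fun _ => hr.mul_le T hx fun y' hy =>
    (T.mul_le_mul le_rfl (hf hy)).trans (le_iSup (fun y' => T.mul (r' x' y') (f' y')) y')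

theorem iInf_res_le (T : Tnorm) (hr : SupSimulates (flip Z) r' r) {f : S → I} {f' : S' → I}
    (hf : ∀ ⦃y y'⦄, Z y y' → f y ≤ f' y') {x : S} {x' : S'} (hx : Z x x') :
    ⨅ y, T.res (r x y) (f y) ≤ ⨅ y', T.res (r' x' y') (f' y') := by
  refine le_iInf fun y' => T.le_res_iff.2 ?_
  rw [T.mul_comm]
  refine hr.mul_le T hx fun y hy => ?_
  rw [T.mul_comm, ← T.le_res_iff]
  exact (iInf_le _ y).trans (T.res_le_res le_rfl (hf hy))

end

section

variable {S S' : Type} {Z : S → S' → Prop} {r : S → S → I} {r' : S' → S' → I}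

theorem chainProd_le_iSup_relStar (T : Tnorm) (hr : SupSimulates Z r r') (l : List S) :
    ∀ {x : S} {x' : S'}, Z x x' →
      chainProd T r x l ≤ ⨆ y', ⨆ _ : Z (l.getLastD x) y', T.relStar r' x' y' := by
  induction l with
  | nil => exact fun {_ x'} hx => le_iSup₂_of_le x' hx (T.one_le_relStar r' x')
  | cons y l ih =>
    intro x x' hx
    rw [List.getLastD_cons]
    refine hr.mul_le T hx fun y' hy => ?_
    rw [T.mul_comm, ← T.le_res_iff]
    refine (ih hy).trans (iSup₂_le fun z' hz => ?_)
    rw [T.le_res_iff, T.mul_comm]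
    exact le_iSup₂_of_le z' hz (T.mul_relStar_le r' x' y' z')

theorem relStar (T : Tnorm) (hr : SupSimulates Z r r') :
    SupSimulates Z (T.relStar r) (T.relStar r') := by
  intro x x' hx y
  apply sSup_le
  rintro _ ⟨l, rfl, rfl⟩
  exact hr.chainProd_le_iSup_relStar T l hx

end

end SupSimulates

theorem baaz_le_baaz {a b : I} (h : a ≤ b) :
    (if a = 1 then (1 : I) else 0) ≤ if b = 1 then 1 else 0 := by
  split_ifs with ha hb
  · exact le_rfl
  · exact absurd (le_antisymm unitInterval.le_one' (ha ▸ h)) hb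
  · exact unitInterval.nonneg'
  · exact le_rfl

namespace IsDirSimulation

variable {A P S S' : Type} {M : FLTS A P S} {M' : FLTS A P S'} {Z : S → S' → Prop}

theorem supSimulates_delta (hZ : IsDirSimulation M M' Z) (ρ : A) :
    SupSimulates Z (M.delta · ρ ·) (M'.delta · ρ ·) :=
  .of_forall_pos fun x x' y => hZ.2.1 x y x' ρ

theorem supSimulates_flip_delta (hZ : IsDirSimulation M M' Z) (ρ : A) :
    SupSimulates (flip Z) (M'.delta · ρ ·) (M.delta · ρ ·) :=
  .of_forall_pos fun x' x y' => hZ.2.2 x x' y' ρ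

mutual
theorem pformSem_le (T : Tnorm) (hZ : IsDirSimulation M M' Z) :
    ∀ (φ : PForm A P) ⦃x : S⦄ ⦃x' : S'⦄, Z x x' → pformSem T M φ x ≤ pformSem T M' φ x'
  | .const _, _, _, _ => le_rfl
  | .prop p, x, x', hx => hZ.1 x x' hx p
  | .baaz φ, _, _, hx => baaz_le_baaz (hZ.pformSem_le T φ hx)
  | .and φ ψ, _, _, hx => min_le_min (hZ.pformSem_le T φ hx) (hZ.pformSem_le T ψ hx)
  | .or φ ψ, _, _, hx => max_le_max (hZ.pformSem_le T φ hx) (hZ.pformSem_le T ψ hx)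
  | .impl _ φ, _, _, hx => T.res_le_res le_rfl (hZ.pformSem_le T φ hx)
  | .dia α φ, _, _, hx => (hZ.supSimulates_peSem T α).iSup_mul_le T (hZ.pformSem_le T φ) hx
  | .box γ φ, _, _, hx => (hZ.supSimulates_puSem T γ).iInf_res_le T (hZ.pformSem_le T φ) hx

theorem supSimulates_peSem (T : Tnorm) (hZ : IsDirSimulation M M' Z) :
    ∀ α : PEProg A P, SupSimulates Z (peSem T M α) (peSem T M' α)
  | .act ρ => hZ.supSimulates_delta ρ
  | .comp α β => (hZ.supSimulates_peSem T α).relComp T (hZ.supSimulates_peSem T β)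
  | .union α β => (hZ.supSimulates_peSem T α).union (hZ.supSimulates_peSem T β)
  | .star α => (hZ.supSimulates_peSem T α).relStar T
  | .test φ => .test (hZ.pformSem_le T φ)

theorem supSimulates_puSem (T : Tnorm) (hZ : IsDirSimulation M M' Z) :
    ∀ γ : PUProg A P, SupSimulates (flip Z) (puSem T M' γ) (puSem T M γ)
  | .act ρ => hZ.supSimulates_flip_delta ρ
  | .comp α β => (hZ.supSimulates_puSem T α).relComp T (hZ.supSimulates_puSem T β)
  | .union α β => (hZ.supSimulates_puSem T α).union (hZ.supSimulates_puSem T β)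
  | .star α => (hZ.supSimulates_puSem T α).relStar T
  | .testImp φ _ => .test fun _ _ hx => T.res_le_res (hZ.pformSem_le T φ hx) le_rfl
end

end IsDirSimulation

/-- The embedding of fposΔK formulas into fposΔPDL formulas. -/
def PKForm.toPForm {A P : Type} : PKForm A P → PForm A P
  | .const a => .const a
  | .prop p => .prop p
  | .baaz φ => .baaz φ.toPForm
  | .and φ ψ => .and φ.toPForm ψ.toPForm
  | .or φ ψ => .or φ.toPForm ψ.toPForm
  | .impl a φ => .impl a φ.toPForm
  | .box ρ φ => .box (.act ρ) φ.toPForm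
  | .dia ρ φ => .dia (.act ρ) φ.toPForm

theorem pformSem_toPForm (T : Tnorm) {A P S : Type} (M : FLTS A P S) (φ : PKForm A P) :
    pformSem T M φ.toPForm = pkSem T M φ := by
  induction φ <;> funext x <;> simp only [PKForm.toPForm, pformSem, peSem, puSem, pkSem, *]

theorem exists_lt_forall_le_of_lt {ι α : Type*} [LinearOrder α] [OrderBot α] {f : ι → α}
    (hf : {i | ⊥ < f i}.Finite) {a : α} (ha : ⊥ < a) : ∃ c < a, ∀ i, f i < a → f i ≤ c := by
  have hs : {i | ⊥ < f i ∧ f i < a}.Finite := hf.subset fun i hi => hi.1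
  refine ⟨hs.toFinset.sup f, (Finset.sup_lt_iff ha).2 fun i hi => (hs.mem_toFinset.1 hi).2,
    fun i hi => ?_⟩
  rcases eq_bot_or_bot_lt (f i) with h_bot | h_pos
  · exact h_bot.trans_le bot_le
  · exact Finset.le_sup (hs.mem_toFinset.2 ⟨h_pos, hi⟩)

/-- The order of states by their values on fposΔK formulas. -/
def PKLe (T : Tnorm) {A P S S' : Type} (M : FLTS A P S) (M' : FLTS A P S') (x : S) (x' : S') :
    Prop :=
  ∀ φ : PKForm A P, pkSem T M φ x ≤ pkSem T M' φ x'

section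

variable {T : Tnorm} {A P S S' : Type} {M : FLTS A P S} {M' : FLTS A P S'}

-- For `φ` of value `a` at `y`, the formula `Δ (a → φ)` says that `φ` has value at least `a`.
theorem exists_separating_of_not_pkLe {y : S} {y' : S'} (h : ¬ PKLe T M M' y y') :
    ∃ ψ : PKForm A P, pkSem T M ψ y = 1 ∧ pkSem T M' ψ y' = 0 := by
  obtain ⟨φ, hφ⟩ := not_forall.1 h
  refine ⟨.baaz (.impl (pkSem T M φ y) φ), if_pos (T.res_eq_one_iff.2 le_rfl), if_neg ?_⟩
  exact fun h_one => hφ (T.res_eq_one_iff.1 h_one)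

theorem exists_separating_of_finite_right {y : S} {F : Set S'} (hF : F.Finite)
    (h : ∀ y' ∈ F, ¬ PKLe T M M' y y') :
    ∃ ψ : PKForm A P, pkSem T M ψ y = 1 ∧ ∀ y' ∈ F, pkSem T M' ψ y' = 0 := by
  induction F, hF using Set.Finite.induction_on with
  | empty => exact ⟨.const 1, rfl, fun _ => False.elim⟩
  | @insert b F _ _ ih =>
    obtain ⟨hb, hF⟩ := Set.forall_mem_insert.1 h
    obtain ⟨χ, hχy, hχb⟩ := exists_separating_of_not_pkLe hb
    obtain ⟨ψ, hψy, hψF⟩ := ih hF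
    refine ⟨.and χ ψ, by simp only [pkSem, hχy, hψy, min_self], Set.forall_mem_insert.2 ⟨?_, ?_⟩⟩
    · simp only [pkSem, hχb, min_eq_left unitInterval.nonneg']
    · exact fun y' hy' => by simp only [pkSem, hψF y' hy', min_eq_right unitInterval.nonneg']

theorem exists_separating_of_finite_left {F : Set S} {y' : S'} (hF : F.Finite)
    (h : ∀ y ∈ F, ¬ PKLe T M M' y y') :
    ∃ ψ : PKForm A P, (∀ y ∈ F, pkSem T M ψ y = 1) ∧ pkSem T M' ψ y' = 0 := by
  induction F, hF using Set.Finite.induction_on with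
  | empty => exact ⟨.const 0, fun _ => False.elim, rfl⟩
  | @insert b F _ _ ih =>
    obtain ⟨hb, hF⟩ := Set.forall_mem_insert.1 h
    obtain ⟨χ, hχb, hχy'⟩ := exists_separating_of_not_pkLe hb
    obtain ⟨ψ, hψF, hψy'⟩ := ih hF
    refine ⟨.or χ ψ, Set.forall_mem_insert.2 ⟨?_, ?_⟩, by simp only [pkSem, hχy', hψy', max_self]⟩
    · simp only [pkSem, hχb, max_eq_left unitInterval.le_one']
    · exact fun y hy => by simp only [pkSem, hψF y hy, max_eq_right unitInterval.le_one']

theorem PKLe.exists_delta_le {x : S} {x' : S'} (h : PKLe T M M' x x') (hf' : ImageFinite M')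
    (ρ : A) {y : S} (hy : 0 < M.delta x ρ y) :
    ∃ y', M.delta x ρ y ≤ M'.delta x' ρ y' ∧ PKLe T M M' y y' := by
  by_contra! h_none
  obtain ⟨c, hca, hc⟩ := exists_lt_forall_le_of_lt (hf' x' ρ) hy
  have h_fin : {y' | M.delta x ρ y ≤ M'.delta x' ρ y'}.Finite :=
    (hf' x' ρ).subset fun _ => hy.trans_le
  obtain ⟨ψ, hψy, hψ⟩ := exists_separating_of_finite_right h_fin h_none
  have h_dia_ge : M.delta x ρ y ≤ pkSem T M (.dia ρ ψ) x := by
    refine le_iSup_of_le y ?_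
    rw [hψy, T.mul_one]
  have h_dia_le : pkSem T M' (.dia ρ ψ) x' ≤ c := by
    refine iSup_le fun y' => ?_
    rcases le_or_gt (M.delta x ρ y) (M'.delta x' ρ y') with h_le | h_lt
    · rw [hψ y' h_le, T.mul_zero]
      exact unitInterval.nonneg'
    · exact (T.mul_le_left _ _).trans (hc y' h_lt)
  exact hca.not_ge (h_dia_ge.trans ((h _).trans h_dia_le))

theorem PKLe.exists_delta_ge {x : S} {x' : S'} (h : PKLe T M M' x x') (hf : ImageFinite M)
    (ρ : A) {y' : S'} (hy' : 0 < M'.delta x' ρ y') :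
    ∃ y, M'.delta x' ρ y' ≤ M.delta x ρ y ∧ PKLe T M M' y y' := by
  by_contra! h_none
  obtain ⟨c, hca, hc⟩ := exists_lt_forall_le_of_lt (hf x ρ) hy'
  have h_fin : {y | M'.delta x' ρ y' ≤ M.delta x ρ y}.Finite :=
    (hf x ρ).subset fun _ => hy'.trans_le
  obtain ⟨ψ, hψ, hψy'⟩ := exists_separating_of_finite_left h_fin h_none
  have h_box_ge : 1 ≤ pkSem T M (.box ρ (.or ψ (.const c))) x := by
    refine le_iInf fun y => ge_of_eq (T.res_eq_one_iff.2 ?_)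
    rcases le_or_gt (M'.delta x' ρ y') (M.delta x ρ y) with h_le | h_lt
    · exact le_max_of_le_left ((hψ y h_le).symm ▸ unitInterval.le_one')
    · exact le_max_of_le_right (hc y h_lt)
  have h_box_le : pkSem T M' (.box ρ (.or ψ (.const c))) x' ≤ T.res (M'.delta x' ρ y') c := by
    refine iInf_le_of_le y' (T.res_le_res le_rfl ?_)
    exact max_le (hψy'.trans_le unitInterval.nonneg') le_rfl
  have h_le : M'.delta x' ρ y' ≤ c :=
    T.res_eq_one_iff.1 (le_antisymm unitInterval.le_one' (h_box_ge.trans ((h _).trans h_box_le)))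
  exact hca.not_ge h_le

variable (T) in
theorem isDirSimulation_pkLe (hf : ImageFinite M) (hf' : ImageFinite M') :
    IsDirSimulation M M' (PKLe T M M') :=
  ⟨fun _ _ h p => h (.prop p), fun _ _ _ ρ h => h.exists_delta_le hf' ρ,
    fun _ _ _ ρ h => h.exists_delta_ge hf ρ⟩

end

theorem dirSimulation_characterization_fposPDL_fposK_general {A P S S' : Type}
    (T : Tnorm) (M : FLTS A P S) (M' : FLTS A P S')
    (hfM : ImageFinite M) (hfM' : ImageFinite M') (x : S) (x' : S') :
    ((∀ φ : PForm A P, pformSem T M φ x ≤ pformSem T M' φ x') ↔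
      (∃ Z : S → S' → Prop, IsDirSimulation M M' Z ∧ Z x x')) ∧
    ((∃ Z : S → S' → Prop, IsDirSimulation M M' Z ∧ Z x x') ↔
      (∀ φ : PKForm A P, pkSem T M φ x ≤ pkSem T M' φ x')) := by
  have h_sim_pdl : (∃ Z : S → S' → Prop, IsDirSimulation M M' Z ∧ Z x x') →
      ∀ φ : PForm A P, pformSem T M φ x ≤ pformSem T M' φ x' :=
    fun ⟨_, hZ, hx⟩ φ => hZ.pformSem_le T φ hx
  have h_pdl_k (h : ∀ φ : PForm A P, pformSem T M φ x ≤ pformSem T M' φ x') : PKLe T M M' x x' :=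
    fun φ => by simpa only [pformSem_toPForm] using h φ.toPForm
  have h_k_sim (h : PKLe T M M' x x') : ∃ Z : S → S' → Prop, IsDirSimulation M M' Z ∧ Z x x' :=
    ⟨_, isDirSimulation_pkLe T hfM hfM', h⟩
  exact ⟨⟨h_k_sim ∘ h_pdl_k, h_sim_pdl⟩, ⟨h_pdl_k ∘ h_sim_pdl, h_k_sim⟩⟩

/-- For image-finite FLTSs witnessed w.r.t. fposΔPDL, the following are equivalent:
(i) `x ≤^pos x'` (w.r.t. all fposΔPDL formulas),
(ii) there is a crisp directed simulation linking `x` to `x'`,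
(iii) `x ≤^pos_K x'` (w.r.t. all fposΔK formulas). -/
theorem dirSimulation_characterization_fposPDL_fposK
    {A P S S' : Type} [Nonempty A] [Nonempty P] [Nonempty S] [Nonempty S']
    (T : Tnorm) (M : FLTS A P S) (M' : FLTS A P S')
    (hfM : ImageFinite M) (hfM' : ImageFinite M')
    (hwM : WitnessedP T M) (hwM' : WitnessedP T M')
    (x : S) (x' : S') :
    ((∀ φ : PForm A P, pformSem T M φ x ≤ pformSem T M' φ x') ↔
      (∃ Z : S → S' → Prop, IsDirSimulation M M' Z ∧ Z x x')) ∧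
    ((∃ Z : S → S' → Prop, IsDirSimulation M M' Z ∧ Z x x') ↔
      (∀ φ : PKForm A P, pkSem T M φ x ≤ pkSem T M' φ x')) :=
  dirSimulation_characterization_fposPDL_fposK_general T M M' hfM hfM' x x'
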